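/- For k = 0,1, let μ̂ₙᵏ ∈ ℝ^p and symmetric positive definite p×p matrices Σ̂ₙᵏ satisfy μ̂ₙᵏ → μ_k in ℝ^p and Σ̂ₙᵏ → Σ_k (in Frobenius norm) as n → ∞, and let Êₙ be the classification error function defined from (μ̂ₙ⁰, μ̂ₙ¹, Σ̂ₙ⁰, Σ̂ₙ¹) by the same formula as E. Then Êₙ converges to E uniformly on the unit sphere S^{p−1} = {α ∈ ℝ^p : ‖α‖ = 1}, i.e. sup_{‖α‖=1} |Êₙ(α) − E(α)| → 0. -/

import Mathlib

open MeasureTheory ProbabilityTheory Matrix Filter Set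

noncomputable def Phi (t : ℝ) : ℝ := ((gaussianReal 0 1) (Set.Iic t)).toReal
noncomputable def calE (r g : ℝ) : ℝ :=
  if g = 1 then Phi (-(|r| / 2))
  else
    1/2
      + (1/2) * Phi ((r - g * Real.sqrt (r^2 + (g^2 - 1) * Real.log (g^2))) / (g^2 - 1))
      - (1/2) * Phi ((r + g * Real.sqrt (r^2 + (g^2 - 1) * Real.log (g^2))) / (g^2 - 1))
      + (1/2) * Phi ((r * g + Real.sqrt (r^2 + (g^2 - 1) * Real.log (g^2))) / (g^2 - 1))
      - (1/2) * Phi ((r * g - Real.sqrt (r^2 + (g^2 - 1) * Real.log (g^2))) / (g^2 - 1))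
noncomputable def Evec {p : ℕ} (μ0 μ1 : Fin p → ℝ) (S0 S1 : Matrix (Fin p) (Fin p) ℝ)
    (α : Fin p → ℝ) : ℝ :=
  calE ((dotProduct α μ0 - dotProduct α μ1) / Real.sqrt (dotProduct α (S1.mulVec α)))
    (Real.sqrt (dotProduct α (S0.mulVec α)) / Real.sqrt (dotProduct α (S1.mulVec α)))
noncomputable def frobNorm {p : ℕ} (M : Matrix (Fin p) (Fin p) ℝ) : ℝ :=
  Real.sqrt (∑ i, ∑ j, (M i j)^2)

/-!
Since the sphere is compact, it is enough that `Evec` is jointly continuous in the parameters and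
the direction wherever both variances are positive, and hence that `𝓔` is continuous on
`ℝ × (0, ∞)`. The defining formula of `𝓔` is singular along `g = 1`. With
`w± = (r ± √Δ) / (2 (g + 1))` one has `w₊ w₋ = -(g - 1) log g / (2 (g + 1))`, so that the four
arguments of `Φ` become `-log g / (2 w±) ± w±`, in which `g - 1` no longer occurs in a denominator.
Pairing those with the same `w±` leaves two Gaussian masses of intervals of half-width `w±`; these
are continuous also at `w± = 0`, because `Φ` is Lipschitz.
-/

lemma gaussianPDFReal_le_inv_sqrt (m : ℝ) (v : NNReal) (x : ℝ) :
    gaussianPDFReal m v x ≤ (√(2 * Real.pi * v))⁻¹ :=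
  mul_le_of_le_one_right (by positivity) <| Real.exp_le_one_iff.2 <|
    div_nonpos_of_nonpos_of_nonneg (neg_nonpos.2 (sq_nonneg _)) (by positivity)

lemma gaussianReal_le_smul_volume (m : ℝ) {v : NNReal} (hv : v ≠ 0) :
    gaussianReal m v ≤ ENNReal.ofReal (√(2 * Real.pi * v))⁻¹ • volume := by
  rw [gaussianReal_of_var_ne_zero m hv, ← withDensity_const]
  exact withDensity_mono (ae_of_all _ fun x =>
    ENNReal.ofReal_le_ofReal (gaussianPDFReal_le_inv_sqrt m v x))

lemma lipschitzWith_measureReal_Iic {μ : Measure ℝ} [IsFiniteMeasure μ] {C : NNReal}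
    (hμ : μ ≤ C • volume) : LipschitzWith C fun t => μ.real (Iic t) := by
  refine LipschitzWith.of_le_add_mul C fun s t => ?_
  have hIoc : μ.real (Ioc t s) ≤ C * dist s t :=
    calc μ.real (Ioc t s) ≤ (C • volume : Measure ℝ).real (Ioc t s) :=
          ENNReal.toReal_mono (measure_Ioc_lt_top (μ := C • volume)).ne (hμ _)
      _ = C * max (s - t) 0 := by
          rw [measureReal_nnreal_smul_apply, Real.volume_real_Ioc]
      _ ≤ C * dist s t := by
          gcongr
          exact max_le (le_abs_self _) dist_nonneg
  calc μ.real (Iic s) ≤ μ.real (Iic t ∪ Ioc t s) :=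
        measureReal_mono fun x hx => (le_or_gt x t).imp id fun h => ⟨h, hx⟩
    _ ≤ μ.real (Iic t) + μ.real (Ioc t s) := measureReal_union_le _ _
    _ ≤ μ.real (Iic t) + C * dist s t := by gcongr

lemma lipschitzWith_Phi : LipschitzWith (√(2 * Real.pi))⁻¹.toNNReal Phi := by
  have h : LipschitzWith (√(2 * Real.pi * (1 : NNReal)))⁻¹.toNNReal Phi :=
    lipschitzWith_measureReal_Iic (gaussianReal_le_smul_volume 0 one_ne_zero)
  simpa only [NNReal.coe_one, mul_one] using h

@[fun_prop]
lemma continuous_Phi : Continuous Phi :=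
  lipschitzWith_Phi.continuous

lemma Phi_neg (t : ℝ) : Phi (-t) = 1 - Phi t := by
  have : NullSingletonClass (gaussianReal 0 1) := nullSingletonClass_gaussianReal one_ne_zero
  have h_symm : (gaussianReal 0 1).map (fun x => -x) = gaussianReal 0 1 := by
    rw [gaussianReal_map_neg, neg_zero]
  have h_reflect : (gaussianReal 0 1).real (Iic (-t)) = (gaussianReal 0 1).real (Ici t) := by
    conv_lhs => rw [← h_symm]
    rw [map_measureReal_apply measurable_neg measurableSet_Iic]
    congr 1
    ext x
    simp
  calc Phi (-t) = (gaussianReal 0 1).real (Ioi t) :=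
        h_reflect.trans (measureReal_congr Ioi_ae_eq_Ici.symm)
    _ = 1 - Phi t := by
        rw [← compl_Iic]
        exact probReal_compl_eq_one_sub measurableSet_Iic

/-- The standard Gaussian mass of the interval with centre `-l / (2 * w)` and half-width `w`,
counted negatively when `w < 0`. At `w = 0` it vanishes, whatever value is given to the centre. -/
noncomputable def gaussianWindow (l w : ℝ) : ℝ :=
  Phi (-l / (2 * w) + w) - Phi (-l / (2 * w) - w)

@[simp]
lemma gaussianWindow_zero_right (l : ℝ) : gaussianWindow l 0 = 0 := by
  simp [gaussianWindow]

lemma gaussianWindow_zero_left (w : ℝ) : gaussianWindow 0 w = 2 * Phi w - 1 := by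
  simp only [gaussianWindow, neg_zero, zero_div, zero_add, zero_sub, Phi_neg]
  ring

-- The centre blows up at `w = 0`, but the mass of the window is bounded by its width.
@[fun_prop]
lemma continuous_gaussianWindow : Continuous fun x : ℝ × ℝ => gaussianWindow x.1 x.2 := by
  refine continuous_iff_continuousAt.2 fun ⟨l, w⟩ => ?_
  rcases eq_or_ne w 0 with rfl | hw
  · set C := (√(2 * Real.pi))⁻¹.toNNReal
    have h_le_width (x : ℝ × ℝ) : ‖gaussianWindow x.1 x.2‖ ≤ C * |x.2 + x.2| := by
      refine (lipschitzWith_Phi.dist_le_mul _ _).trans_eq ?_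
      rw [Real.dist_eq, add_sub_sub_cancel]
    have h_width : ContinuousAt (fun x : ℝ × ℝ => C * |x.2 + x.2|) (l, 0) := by fun_prop
    simpa [ContinuousAt] using squeeze_zero_norm h_le_width (by simpa using h_width.tendsto)
  · have : 2 * (l, w).2 ≠ 0 := mul_ne_zero two_ne_zero hw
    unfold gaussianWindow
    fun_prop (disch := assumption)

/-- The paper's `Δ(r, g)`. -/
noncomputable def disc (r g : ℝ) : ℝ := r ^ 2 + (g ^ 2 - 1) * Real.log (g ^ 2)

lemma disc_nonneg (r g : ℝ) : 0 ≤ disc r g := by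
  have h_prod : 0 ≤ (g ^ 2 - 1) * Real.log (g ^ 2) := by
    rcases le_total (g ^ 2) 1 with h | h
    · exact mul_nonneg_of_nonpos_of_nonpos (sub_nonpos.2 h) (Real.log_nonpos (sq_nonneg g) h)
    · exact mul_nonneg (sub_nonneg.2 h) (Real.log_nonneg h)
  exact add_nonneg (sq_nonneg r) h_prod

lemma continuousAt_disc (r : ℝ) {g : ℝ} (hg : g ≠ 0) :
    ContinuousAt (fun x : ℝ × ℝ => disc x.1 x.2) (r, g) := by
  have : (r, g).2 ^ 2 ≠ 0 := pow_ne_zero 2 hg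
  unfold disc
  fun_prop (disch := assumption)

/-- `d` stands for either square root of `Δ(r, g)`. Rationalising `(r - d) * (r + d)` moves the
singularity at `g = 1` into the centre of a window. -/
lemma gaussianWindow_log_eq {r g d : ℝ} (hg : 0 < g) (hg1 : g ≠ 1) (hd : d ^ 2 = disc r g) :
    gaussianWindow (Real.log g) ((r + d) / (2 * (g + 1))) =
      Phi ((r * g - d) / (g ^ 2 - 1)) - Phi ((r - g * d) / (g ^ 2 - 1)) := by
  have h_sub : g - 1 ≠ 0 := sub_ne_zero.2 hg1
  have h_add : g + 1 ≠ 0 := by positivity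
  have h_factor : g ^ 2 - 1 = (g - 1) * (g + 1) := by ring
  rcases eq_or_ne (r + d) 0 with h0 | h0
  · obtain rfl : d = -r := (neg_eq_of_add_eq_zero_right h0).symm
    have h_args : r * g - -r = r - g * -r := by ring
    simp [h_args]
  · have h_center : -Real.log g / (2 * ((r + d) / (2 * (g + 1)))) = (r - d) / (2 * (g - 1)) := by
      rw [disc, Real.log_pow, Nat.cast_two] at hd
      field_simp
      linear_combination hd
    rw [gaussianWindow, h_center, h_factor]
    have h_upper : (r - d) / (2 * (g - 1)) + (r + d) / (2 * (g + 1)) =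
        (r * g - d) / ((g - 1) * (g + 1)) := by
      field_simp
      ring
    have h_lower : (r - d) / (2 * (g - 1)) - (r + d) / (2 * (g + 1)) =
        (r - g * d) / ((g - 1) * (g + 1)) := by
      field_simp
      ring
    rw [h_upper, h_lower]

lemma calE_eq_gaussianWindow (r : ℝ) {g : ℝ} (hg : 0 < g) :
    calE r g = 1 / 2 + (gaussianWindow (Real.log g) ((r - √(disc r g)) / (2 * (g + 1))) -
      gaussianWindow (Real.log g) ((r + √(disc r g)) / (2 * (g + 1)))) / 2 := by
  rcases eq_or_ne g 1 with rfl | hg1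
  · have h_sqrt : √(disc r 1) = |r| := by simp [disc, Real.sqrt_sq_eq_abs]
    rw [h_sqrt, Real.log_one, calE, if_pos rfl]
    rcases abs_cases r with ⟨h, -⟩ | ⟨h, -⟩
    · have h_minus : (r - |r|) / (2 * (1 + 1)) = 0 := by rw [h]; ring
      have h_plus : (r + |r|) / (2 * (1 + 1)) = |r| / 2 := by rw [h]; ring
      rw [h_minus, h_plus, gaussianWindow_zero_right, gaussianWindow_zero_left, Phi_neg]
      ring
    · have h_minus : (r - |r|) / (2 * (1 + 1)) = -(|r| / 2) := by rw [h]; ring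
      have h_plus : (r + |r|) / (2 * (1 + 1)) = 0 := by rw [h]; ring
      rw [h_minus, h_plus, gaussianWindow_zero_right, gaussianWindow_zero_left]
      ring
  · have h_sq : √(disc r g) ^ 2 = disc r g := Real.sq_sqrt (disc_nonneg r g)
    have h_neg := gaussianWindow_log_eq hg hg1 ((neg_sq _).trans h_sq)
    simp only [← sub_eq_add_neg, mul_neg, sub_neg_eq_add] at h_neg
    rw [gaussianWindow_log_eq hg hg1 h_sq, h_neg, calE, if_neg hg1]
    simp only [disc]
    ring

lemma continuousAt_calE (r : ℝ) {g : ℝ} (hg : 0 < g) :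
    ContinuousAt (fun x : ℝ × ℝ => calE x.1 x.2) (r, g) := by
  have h_pos : ∀ᶠ x : ℝ × ℝ in nhds (r, g), 0 < x.2 :=
    continuousAt_snd.eventually_const_lt hg
  have h_log : (r, g).2 ≠ 0 := hg.ne'
  have h_den : 2 * ((r, g).2 + 1) ≠ 0 := by positivity
  have h_disc := continuousAt_disc r hg.ne'
  refine ContinuousAt.congr ?_ (h_pos.mono fun x hx => (calE_eq_gaussianWindow x.1 hx).symm)
  fun_prop (disch := assumption)

lemma continuousAt_Evec {X : Type*} [TopologicalSpace X] {p : ℕ} {m0 m1 α : X → Fin p → ℝ}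
    {T0 T1 : X → Matrix (Fin p) (Fin p) ℝ} {x : X}
    (hm0 : ContinuousAt m0 x) (hm1 : ContinuousAt m1 x) (hT0 : ContinuousAt T0 x)
    (hT1 : ContinuousAt T1 x) (hα : ContinuousAt α x)
    (h0 : 0 < α x ⬝ᵥ T0 x *ᵥ α x) (h1 : 0 < α x ⬝ᵥ T1 x *ᵥ α x) :
    ContinuousAt (fun y => Evec (m0 y) (m1 y) (T0 y) (T1 y) (α y)) x := by
  have h_dot {u v : X → Fin p → ℝ} (hu : ContinuousAt u x) (hv : ContinuousAt v x) :
      ContinuousAt (fun y => u y ⬝ᵥ v y) x :=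
    (by fun_prop : Continuous fun w : (Fin p → ℝ) × (Fin p → ℝ) => w.1 ⬝ᵥ w.2).continuousAt.comp
      (hu.prodMk hv)
  have h_mulVec {T : X → Matrix (Fin p) (Fin p) ℝ} (hT : ContinuousAt T x) :
      ContinuousAt (fun y => T y *ᵥ α y) x :=
    (by fun_prop : Continuous fun w : Matrix (Fin p) (Fin p) ℝ × (Fin p → ℝ) =>
      w.1 *ᵥ w.2).continuousAt.comp (hT.prodMk hα)
  have h_sd0 := (h_dot hα (h_mulVec hT0)).sqrt
  have h_sd1 := (h_dot hα (h_mulVec hT1)).sqrt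
  have h_pos0 := Real.sqrt_pos.2 h0
  have h_pos1 := Real.sqrt_pos.2 h1
  exact (continuousAt_calE _ (div_pos h_pos0 h_pos1)).tendsto.comp
    ((((h_dot hα hm0).sub (h_dot hα hm1)).div h_sd1 h_pos1.ne').prodMk
      (h_sd0.div h_sd1 h_pos1.ne'))

section Frobenius

attribute [local instance] Matrix.frobeniusNormedAddCommGroup

lemma frobNorm_eq_norm {p : ℕ} (M : Matrix (Fin p) (Fin p) ℝ) : frobNorm M = ‖M‖ := by
  simp [frobNorm, frobenius_norm_def, Real.sqrt_eq_rpow]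

lemma tendsto_iff_frobNorm_sub_tendsto_zero {ι : Type*} {l : Filter ι} {p : ℕ}
    {Sh : ι → Matrix (Fin p) (Fin p) ℝ} {S : Matrix (Fin p) (Fin p) ℝ} :
    Tendsto Sh l (nhds S) ↔ Tendsto (fun i => frobNorm (Sh i - S)) l (nhds 0) := by
  simp only [frobNorm_eq_norm]
  exact tendsto_iff_norm_sub_tendsto_zero

end Frobenius

lemma tendstoUniformlyOn_of_continuousAt {ι Θ X Y : Type*} [TopologicalSpace Θ]
    [TopologicalSpace X] [UniformSpace Y] {F : Θ × X → Y} {K : Set X} {θ : Θ} {θh : ι → Θ}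
    {l : Filter ι} (hK : IsCompact K) (hF : ∀ x ∈ K, ContinuousAt F (θ, x))
    (hθ : Tendsto θh l (nhds θ)) :
    TendstoUniformlyOn (fun i x => F (θh i, x)) (fun x => F (θ, x)) l K := by
  rw [← tendstoLocallyUniformlyOn_iff_tendstoUniformlyOn_of_compact hK,
    tendstoLocallyUniformlyOn_iff_forall_tendsto]
  intro x hx
  have h_snd : Tendsto Prod.snd (l ×ˢ nhdsWithin x K) (nhds x) :=
    tendsto_snd.mono_right nhdsWithin_le_nhds
  have h_limit : Tendsto (fun y : ι × X => F (θ, y.2)) (l ×ˢ nhdsWithin x K) (nhds (F (θ, x))) :=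
    (hF x hx).tendsto.comp (tendsto_const_nhds.prodMk_nhds h_snd)
  have h_approx : Tendsto (fun y : ι × X => F (θh y.1, y.2)) (l ×ˢ nhdsWithin x K)
      (nhds (F (θ, x))) :=
    (hF x hx).tendsto.comp ((hθ.comp tendsto_fst).prodMk_nhds h_snd)
  exact (h_limit.prodMk_nhds h_approx).mono_right (nhds_le_uniformity _)

theorem Evec_uniform_convergence_general {ι : Type*} {l : Filter ι} {p : ℕ}
    {K : Set (EuclideanSpace ℝ (Fin p))} (hK : IsCompact K)
    {μ0 μ1 : EuclideanSpace ℝ (Fin p)} {S0 S1 : Matrix (Fin p) (Fin p) ℝ}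
    (h0 : ∀ α ∈ K, 0 < α.ofLp ⬝ᵥ S0 *ᵥ α) (h1 : ∀ α ∈ K, 0 < α.ofLp ⬝ᵥ S1 *ᵥ α)
    {μh0 μh1 : ι → EuclideanSpace ℝ (Fin p)} {Sh0 Sh1 : ι → Matrix (Fin p) (Fin p) ℝ}
    (hμ0 : Tendsto μh0 l (nhds μ0)) (hμ1 : Tendsto μh1 l (nhds μ1))
    (hS0 : Tendsto Sh0 l (nhds S0)) (hS1 : Tendsto Sh1 l (nhds S1)) :
    TendstoUniformlyOn (fun i (α : EuclideanSpace ℝ (Fin p)) =>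
        Evec (μh0 i) (μh1 i) (Sh0 i) (Sh1 i) α)
      (fun α : EuclideanSpace ℝ (Fin p) => Evec μ0 μ1 S0 S1 α) l K := by
  have h_cont (α : EuclideanSpace ℝ (Fin p)) (hα : α ∈ K) :=
    continuousAt_Evec (x := (((μ0, μ1), S0, S1), α))
      (m0 := fun y => y.1.1.1.ofLp) (m1 := fun y => y.1.1.2.ofLp)
      (T0 := fun y => y.1.2.1) (T1 := fun y => y.1.2.2) (α := fun y => y.2.ofLp)
      (by fun_prop) (by fun_prop) (by fun_prop) (by fun_prop) (by fun_prop) (h0 α hα) (h1 α hα)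
  have h_param : Tendsto (fun i => ((μh0 i, μh1 i), Sh0 i, Sh1 i)) l (nhds ((μ0, μ1), S0, S1)) :=
    (hμ0.prodMk_nhds hμ1).prodMk_nhds (hS0.prodMk_nhds hS1)
  exact (tendstoUniformlyOn_of_continuousAt hK h_cont h_param :)

lemma dotProduct_mulVec_pos_of_mem_sphere {p : ℕ} {S : Matrix (Fin p) (Fin p) ℝ}
    (hS : S.PosDef) {r : ℝ} (hr : r ≠ 0) {α : EuclideanSpace ℝ (Fin p)}
    (hα : α ∈ Metric.sphere 0 r) : 0 < α.ofLp ⬝ᵥ S *ᵥ α := by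
  have h_ne : α.ofLp ≠ 0 := by simpa using ne_zero_of_mem_sphere hr ⟨α, hα⟩
  simpa using hS.dotProduct_mulVec_pos h_ne

/-- If the estimated means and covariances converge (covariances in Frobenius norm),
then the empirical classification error functions Êₙ converge uniformly to E on the
unit sphere. -/
theorem Evec_uniform_convergence {p : ℕ} (hp : 1 ≤ p)
    (μ0 μ1 : EuclideanSpace ℝ (Fin p)) (S0 S1 : Matrix (Fin p) (Fin p) ℝ)
    (h0 : S0.PosDef) (h1 : S1.PosDef)
    (μh0 μh1 : ℕ → EuclideanSpace ℝ (Fin p)) (Sh0 Sh1 : ℕ → Matrix (Fin p) (Fin p) ℝ)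
    (hpd0 : ∀ n, (Sh0 n).PosDef) (hpd1 : ∀ n, (Sh1 n).PosDef)
    (hμ0 : Tendsto μh0 atTop (nhds μ0)) (hμ1 : Tendsto μh1 atTop (nhds μ1))
    (hS0 : Tendsto (fun n => frobNorm (Sh0 n - S0)) atTop (nhds 0))
    (hS1 : Tendsto (fun n => frobNorm (Sh1 n - S1)) atTop (nhds 0)) :
    TendstoUniformlyOn (fun n (α : EuclideanSpace ℝ (Fin p)) =>
        Evec (μh0 n) (μh1 n) (Sh0 n) (Sh1 n) α)
      (fun α : EuclideanSpace ℝ (Fin p) => Evec μ0 μ1 S0 S1 α) atTop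
      (Metric.sphere (0 : EuclideanSpace ℝ (Fin p)) 1) := by
  exact Evec_uniform_convergence_general (isCompact_sphere 0 1)
    (fun _ => dotProduct_mulVec_pos_of_mem_sphere h0 one_ne_zero)
    (fun _ => dotProduct_mulVec_pos_of_mem_sphere h1 one_ne_zero) hμ0 hμ1
    (tendsto_iff_frobNorm_sub_tendsto_zero.2 hS0) (tendsto_iff_frobNorm_sub_tendsto_zero.2 hS1)
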